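/- Let 0 < p ≤ 1, α > 0, let b_ε ∈ L¹([−π/2, π/2]) be a member of a grazing collision family, and let f_ε(t) be the unique solution of the dissipative Kac equation ∂ₜ f̂_ε(ξ,t) = 2∫₀^{π/2} b_ε(θ)(f̂_ε(ξ cos^{p+1}θ, t) f̂_ε(ξ sin^{p+1}θ, t) − f̂_ε(ξ,t)) dθ whose even initial probability density f₀ ≥ 0 satisfies: (A) lim_{ξ→0⁺} (1 − f̂₀(ξ))/ξ^{2/(p+1)} = α; and (B) f̂₀ is differentiable on (0,∞) and there exist δ ∈ (0,1) and, for every R > 0, a constant K(R) > 0 such that |∂_ξ f̂₀(ξ)/ξ^{(1−p)/(p+1)} − ∂_ξ f̂₀(τ)/τ^{(1−p)/(p+1)}| ≤ K(R)|ξ−τ|^δ for all ξ, τ ∈ (0, R], ξ ≠ τ. Let M̂_p(ξ) = e^{−α|ξ|^{2/(p+1)}}. Then for every 0 < δ′ ≤ δ, lim_{t→+∞} sup_{ξ≠0} |f̂_ε(ξ,t) − M̂_p(ξ)| / |ξ|^{2/(p+1)+δ′} = 0. -/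

import Mathlib

/-!
With `a = 2/(p+1)`, the collision kernel scales frequencies by `cos^(p+1) θ` and `sin^(p+1) θ`,
whose `a`-th powers sum to `1`; hence `M̂(ξ) = exp(-α|ξ|^a)` is a fixed point of the gain term.
Mass conservation gives `|f̂| ≤ 1`, so the difference `D = f̂ - M̂` satisfies
`|∂ₜD + 2B D| ≤ 2 ∫ b (|D(ξ cos^(p+1) θ)| + |D(ξ sin^(p+1) θ)|)` with `B = ∫ b`. In the metric with
weight `|ξ|^q`, `q = a + δ'`, this is a contraction with rate
`2 ∫ b (1 - cos^((p+1)q) - sin^((p+1)q))`, which is positive because `(p+1)q > 2`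
(`gain_bound`, `contraction`, `rate_pos`).

It remains to see that the weighted distance is finite at time `0` (`initial_bound`). Conditions (A)
and (B) give `f̂₀(ξ) = 1 - αξ^a + O(ξ^(a+δ))` near `0` (`taylor_bound`), and `M̂` has the same
expansion because `2a ≥ a + δ`; away from `0` the difference is bounded by `2`.
-/

open Real MeasureTheory Set Filter Topology

noncomputable section

/-- Fourier transform of an even real density: `f̂(ξ) = ∫ cos(ξv) f(v) dv`. -/
def ftEven (f : ℝ → ℝ) (ξ : ℝ) : ℝ := ∫ v : ℝ, Real.cos (ξ * v) * f v

/-! ### The cosine transform -/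

lemma ftEven_integrand_integrable {f : ℝ → ℝ} (hf : Integrable f) (ξ : ℝ) :
    Integrable (fun v => Real.cos (ξ * v) * f v) := by
  refine hf.bdd_mul (c := 1) (Continuous.aestronglyMeasurable (by fun_prop)) ?_
  exact Eventually.of_forall fun v => by
    simpa [Real.norm_eq_abs] using Real.abs_cos_le_one (ξ * v)

lemma ftEven_continuous {f : ℝ → ℝ} (hf : Integrable f) : Continuous (ftEven f) := by
  refine continuous_of_dominated (bound := fun v => ‖f v‖)
    (fun ξ => (ftEven_integrand_integrable hf ξ).aestronglyMeasurable) ?_ hf.norm ?_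
  · intro ξ
    refine Eventually.of_forall fun v => ?_
    rw [norm_mul]
    exact mul_le_of_le_one_left (norm_nonneg _) (Real.abs_cos_le_one _)
  · exact Eventually.of_forall fun v => by fun_prop

lemma ftEven_zero (f : ℝ → ℝ) : ftEven f 0 = ∫ v, f v := by simp [ftEven]

lemma ftEven_abs_le {f : ℝ → ℝ} (hf : Integrable f) (hnn : ∀ v, 0 ≤ f v) (ξ : ℝ) :
    |ftEven f ξ| ≤ ftEven f 0 := by
  rw [ftEven_zero, ftEven, ← Real.norm_eq_abs]
  refine norm_integral_le_of_norm_le hf (Eventually.of_forall fun v => ?_)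
  rw [norm_mul, Real.norm_of_nonneg (hnn v)]
  exact mul_le_of_le_one_left (hnn v) (Real.abs_cos_le_one _)

lemma ftEven_abs (f : ℝ → ℝ) (ξ : ℝ) : ftEven f |ξ| = ftEven f ξ := by
  rcases abs_choice ξ with h | h <;> simp [h, ftEven]

/-! ### Scalar differential inequalities -/

lemma nonneg_of_linear_ineq {w w' : ℝ → ℝ} {A : ℝ}
    (hw : ∀ t ∈ Ici (0 : ℝ), HasDerivWithinAt w (w' t) (Ici 0) t)
    (h : ∀ t ∈ Ici (0 : ℝ), 0 ≤ w' t + A * w t) (h0 : 0 ≤ w 0) :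
    ∀ t ∈ Ici (0 : ℝ), 0 ≤ w t := by
  -- the integrating factor `exp (A t)` turns the inequality into monotonicity
  have hd : ∀ t ∈ Ici (0 : ℝ), HasDerivWithinAt (fun s => Real.exp (A * s) * w s)
      (Real.exp (A * t) * (w' t + A * w t)) (Ici 0) t := by
    intro t ht
    have h1 : HasDerivAt (fun s => Real.exp (A * s)) (Real.exp (A * t) * A) t := by
      simpa using ((hasDerivAt_id t).const_mul A).exp
    exact (h1.hasDerivWithinAt.mul (hw t ht)).congr_deriv (by ring)
  have hmono : MonotoneOn (fun s => Real.exp (A * s) * w s) (Ici 0) := by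
    refine monotoneOn_of_hasDerivWithinAt_nonneg (convex_Ici 0)
      (f' := fun t => Real.exp (A * t) * (w' t + A * w t))
      (fun t ht => (hd t ht).continuousWithinAt) ?_ ?_
    · intro t ht
      exact (hd t (interior_subset ht)).mono interior_subset
    · intro t ht
      exact mul_nonneg (Real.exp_pos _).le (h t (interior_subset ht))
  intro t ht
  have h2 := hmono (mem_Ici.2 le_rfl) ht ht
  have h3 : 0 ≤ Real.exp (A * t) * w t := le_trans (by simpa using h0) h2
  exact nonneg_of_mul_nonneg_right h3 (Real.exp_pos _)

/-- Comparison principle for the operator `d/dt + A`. -/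
lemma abs_le_of_linear_ineq {u v u' v' : ℝ → ℝ} {A : ℝ}
    (hu : ∀ t ∈ Ici (0 : ℝ), HasDerivWithinAt u (u' t) (Ici 0) t)
    (hv : ∀ t ∈ Ici (0 : ℝ), HasDerivWithinAt v (v' t) (Ici 0) t)
    (h : ∀ t ∈ Ici (0 : ℝ), |u' t + A * u t| ≤ v' t + A * v t) (h0 : |u 0| ≤ v 0) :
    ∀ t ∈ Ici (0 : ℝ), |u t| ≤ v t := by
  intro t ht
  have h1 := nonneg_of_linear_ineq (A := A) (fun t ht => (hv t ht).sub (hu t ht))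
    (fun t ht => by
      have := (abs_le.1 (h t ht)).2
      simp only [Pi.sub_apply]; linarith) (by
      have := (abs_le.1 h0).2
      simp only [Pi.sub_apply]; linarith) t ht
  have h2 := nonneg_of_linear_ineq (A := A) (fun t ht => (hv t ht).add (hu t ht))
    (fun t ht => by
      have := (abs_le.1 (h t ht)).1
      simp only [Pi.add_apply]; linarith) (by
      have := (abs_le.1 h0).1
      simp only [Pi.add_apply]; linarith) t ht
  simp only [Pi.sub_apply, Pi.add_apply] at h1 h2
  exact abs_le.2 ⟨by linarith, by linarith⟩

/-- The logistic equation `m' = A (m² - m)` preserves the equilibrium value `m = 1`; this is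
conservation of mass. -/
lemma mass_eq_one {m : ℝ → ℝ} {A : ℝ}
    (hm : ∀ t ∈ Ici (0 : ℝ), HasDerivWithinAt m (A * (m t * m t - m t)) (Ici 0) t)
    (h0 : m 0 = 1) : ∀ t ∈ Ici (0 : ℝ), m t = 1 := by
  intro T hT
  have hcont : ContinuousOn m (Icc 0 T) := fun t ht =>
    ((hm t ht.1).continuousWithinAt).mono Icc_subset_Ici_self
  obtain ⟨C, hC⟩ := isCompact_Icc.exists_bound_of_continuousOn hcont
  -- `m` and the constant `1` both solve the equation `x' = A m(t) (x - 1)`, which is linear in `x`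
  have key := ODE_solution_unique_of_mem_Icc_right (v := fun t x => A * m t * (x - 1))
    (s := fun _ => univ) (K := (|A| * C).toNNReal) (f := m) (g := fun _ => 1) (a := 0) (b := T)
    (fun t ht => by
      refine LipschitzOnWith.of_dist_le_mul fun x _ y _ => ?_
      have h1 : A * m t * (x - 1) - A * m t * (y - 1) = A * m t * (x - y) := by ring
      rw [Real.dist_eq, Real.dist_eq, h1, abs_mul, abs_mul]
      have h2 : |m t| ≤ C := hC t ⟨ht.1, ht.2.le⟩
      refine mul_le_mul_of_nonneg_right ?_ (abs_nonneg _)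
      exact (mul_le_mul_of_nonneg_left h2 (abs_nonneg _)).trans (Real.le_coe_toNNReal _))
    hcont
    (fun t ht => by
      exact ((hm t ht.1).mono (Ici_subset_Ici.2 ht.1)).congr_deriv (by ring))
    (fun _ _ => mem_univ _) continuousOn_const
    (fun t _ => by simpa using hasDerivWithinAt_const t (Ici t) (1 : ℝ))
    (fun _ _ => mem_univ _) h0
  exact key ⟨hT, le_rfl⟩

/-! ### The contraction estimate -/

/-- Bound on the collision gain: if `|φ - M| ≤ V |ξ|^q + E` pointwise, where `M` is a fixed point
of the gain operator, then the difference of the gain terms is controlled with the factor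
`∫ b (c^q + s^q)` in front of the weighted part. -/
lemma gain_bound {b c s φ M : ℝ → ℝ} {q V E : ℝ} (hq : 0 ≤ q)
    (hb : IntervalIntegrable b volume 0 (π / 2)) (hbnn : ∀ θ, 0 ≤ b θ)
    (hc : Continuous c) (hs : Continuous s)
    (hc0 : ∀ θ ∈ Icc 0 (π / 2), 0 ≤ c θ) (hs0 : ∀ θ ∈ Icc 0 (π / 2), 0 ≤ s θ)
    (hφc : Continuous φ) (hφ1 : ∀ ξ, |φ ξ| ≤ 1) (hM1 : ∀ ξ, |M ξ| ≤ 1)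
    (hMfix : ∀ ξ, ∀ θ ∈ Icc 0 (π / 2), M (ξ * c θ) * M (ξ * s θ) = M ξ)
    (hD : ∀ ξ, |φ ξ - M ξ| ≤ V * |ξ| ^ q + E) (ξ : ℝ) :
    |2 * (∫ θ in (0 : ℝ)..(π / 2), b θ * (φ (ξ * c θ) * φ (ξ * s θ) - φ ξ)) +
        2 * (∫ θ in (0 : ℝ)..(π / 2), b θ) * (φ ξ - M ξ)| ≤
      2 * (∫ θ in (0 : ℝ)..(π / 2), b θ * (c θ ^ q + s θ ^ q)) * (V * |ξ| ^ q) +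
        4 * (∫ θ in (0 : ℝ)..(π / 2), b θ) * E := by
  have hpi : (0 : ℝ) ≤ π / 2 := by positivity
  have hcq : Continuous fun θ => c θ ^ q := hc.rpow_const fun _ => Or.inr hq
  have hsq : Continuous fun θ => s θ ^ q := hs.rpow_const fun _ => Or.inr hq
  have i1 : IntervalIntegrable (fun θ => b θ * (φ (ξ * c θ) * φ (ξ * s θ) - φ ξ))
      volume 0 (π / 2) := hb.mul_continuousOn (by fun_prop)
  have i2 : IntervalIntegrable (fun θ => b θ * (c θ ^ q + s θ ^ q)) volume 0 (π / 2) :=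
    hb.mul_continuousOn (by fun_prop)
  have e1 : (∫ θ in (0 : ℝ)..(π / 2), b θ * (φ (ξ * c θ) * φ (ξ * s θ) - φ ξ)) +
      (∫ θ in (0 : ℝ)..(π / 2), b θ) * (φ ξ - M ξ) =
      ∫ θ in (0 : ℝ)..(π / 2), b θ * (φ (ξ * c θ) * φ (ξ * s θ) - M ξ) := by
    rw [← intervalIntegral.integral_mul_const, ← intervalIntegral.integral_add i1
      (hb.mul_const _)]
    congr 1; ext θ; ring
  have e2 : |∫ θ in (0 : ℝ)..(π / 2), b θ * (φ (ξ * c θ) * φ (ξ * s θ) - M ξ)| ≤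
      ∫ θ in (0 : ℝ)..(π / 2), (b θ * (c θ ^ q + s θ ^ q) * (V * |ξ| ^ q) + b θ * (2 * E)) := by
    rw [← Real.norm_eq_abs]
    refine intervalIntegral.norm_integral_le_of_norm_le hpi
      (Eventually.of_forall fun θ hθ => ?_) ((i2.mul_const _).add (hb.mul_const _))
    have hθ' : θ ∈ Icc 0 (π / 2) := Ioc_subset_Icc_self hθ
    have w : ∀ r, 0 ≤ r → |ξ * r| ^ q = |ξ| ^ q * r ^ q := fun r hr => by
      rw [abs_mul, abs_of_nonneg hr, Real.mul_rpow (abs_nonneg _) hr]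
    have d1 := hD (ξ * c θ)
    have d2 := hD (ξ * s θ)
    rw [w _ (hc0 θ hθ')] at d1
    rw [w _ (hs0 θ hθ')] at d2
    have split : φ (ξ * c θ) * φ (ξ * s θ) - M ξ =
        (φ (ξ * c θ) - M (ξ * c θ)) * φ (ξ * s θ) +
          M (ξ * c θ) * (φ (ξ * s θ) - M (ξ * s θ)) := by
      rw [← hMfix ξ θ hθ']; ring
    have d3 : |φ (ξ * c θ) * φ (ξ * s θ) - M ξ| ≤
        |φ (ξ * c θ) - M (ξ * c θ)| + |φ (ξ * s θ) - M (ξ * s θ)| := by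
      rw [split]
      refine (abs_add_le _ _).trans (add_le_add ?_ ?_)
      · rw [abs_mul]; exact mul_le_of_le_one_right (abs_nonneg _) (hφ1 _)
      · rw [abs_mul]; exact mul_le_of_le_one_left (abs_nonneg _) (hM1 _)
    rw [Real.norm_eq_abs, abs_mul, abs_of_nonneg (hbnn θ), mul_assoc, ← mul_add]
    refine mul_le_mul_of_nonneg_left ?_ (hbnn θ)
    linarith
  rw [intervalIntegral.integral_add (i2.mul_const _) (hb.mul_const _),
    intervalIntegral.integral_mul_const, intervalIntegral.integral_mul_const] at e2
  rw [mul_assoc 2 (∫ θ in (0 : ℝ)..(π / 2), b θ), ← mul_add, e1, abs_mul, abs_two]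
  linarith

/-- Exponential contraction in the weighted metric. The bound `|φ - M| ≤ 2` is improved by
iterating Duhamel's formula: after `n` steps the error beyond the decaying weighted part is
`2 (4Bt)^n / n!`. No finiteness of the weighted distance at positive times is presupposed. -/
lemma contraction {b c s M : ℝ → ℝ} {φ : ℝ → ℝ → ℝ} {q C : ℝ} (hq : 0 < q)
    (hb : IntervalIntegrable b volume 0 (π / 2)) (hbnn : ∀ θ, 0 ≤ b θ)
    (hc : Continuous c) (hs : Continuous s)
    (hc0 : ∀ θ ∈ Icc 0 (π / 2), 0 ≤ c θ) (hs0 : ∀ θ ∈ Icc 0 (π / 2), 0 ≤ s θ)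
    (hφc : ∀ t ∈ Ici (0 : ℝ), Continuous (φ t)) (hφ1 : ∀ t ∈ Ici (0 : ℝ), ∀ ξ, |φ t ξ| ≤ 1)
    (hM1 : ∀ ξ, |M ξ| ≤ 1)
    (hMfix : ∀ ξ, ∀ θ ∈ Icc 0 (π / 2), M (ξ * c θ) * M (ξ * s θ) = M ξ)
    (heq : ∀ ξ, ∀ t ∈ Ici (0 : ℝ), HasDerivWithinAt (fun r => φ r ξ)
      (2 * ∫ θ in (0 : ℝ)..(π / 2), b θ * (φ t (ξ * c θ) * φ t (ξ * s θ) - φ t ξ)) (Ici 0) t)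
    (hC : 0 ≤ C) (hinit : ∀ ξ, |φ 0 ξ - M ξ| ≤ C * |ξ| ^ q) :
    ∀ t ∈ Ici (0 : ℝ), ∀ ξ, |φ t ξ - M ξ| ≤
      C * Real.exp (-(2 * (∫ θ in (0 : ℝ)..(π / 2), b θ) -
        2 * ∫ θ in (0 : ℝ)..(π / 2), b θ * (c θ ^ q + s θ ^ q)) * t) * |ξ| ^ q := by
  set B := ∫ θ in (0 : ℝ)..(π / 2), b θ with hB
  set J := ∫ θ in (0 : ℝ)..(π / 2), b θ * (c θ ^ q + s θ ^ q) with hJ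
  have hpi : (0 : ℝ) ≤ π / 2 := by positivity
  have hB0 : 0 ≤ B := intervalIntegral.integral_nonneg hpi fun θ _ => hbnn θ
  have step : ∀ n : ℕ, ∀ t ∈ Ici (0 : ℝ), ∀ ξ, |φ t ξ - M ξ| ≤
      C * Real.exp (-(2 * B - 2 * J) * t) * |ξ| ^ q + 2 * ((4 * B * t) ^ n / n.factorial) := by
    intro n
    induction n with
    | zero =>
      intro t ht ξ
      have h1 : |φ t ξ - M ξ| ≤ 2 := by
        refine (abs_sub _ _).trans ?_
        linarith [hφ1 t ht ξ, hM1 ξ]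
      have h2 : 0 ≤ C * Real.exp (-(2 * B - 2 * J) * t) * |ξ| ^ q := by positivity
      simp only [pow_zero, Nat.factorial_zero, Nat.cast_one, div_one]
      linarith
    | succ n ih =>
      intro t ht ξ
      refine abs_le_of_linear_ineq (A := 2 * B) (u := fun t => φ t ξ - M ξ)
        (v := fun t => C * Real.exp (-(2 * B - 2 * J) * t) * |ξ| ^ q +
          2 * ((4 * B * t) ^ (n + 1) / (n + 1).factorial))
        (v' := fun t => C * (Real.exp (-(2 * B - 2 * J) * t) * (-(2 * B - 2 * J))) * |ξ| ^ q +
          4 * B * (2 * ((4 * B * t) ^ n / n.factorial)))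
        (fun r hr => (heq ξ r hr).sub_const _) ?_ ?_ ?_ t ht
      · intro r hr
        refine HasDerivAt.hasDerivWithinAt (HasDerivAt.add ?_ ?_)
        · have h1 : HasDerivAt (fun s => Real.exp (-(2 * B - 2 * J) * s))
              (Real.exp (-(2 * B - 2 * J) * r) * (-(2 * B - 2 * J))) r := by
            simpa using ((hasDerivAt_id r).const_mul (-(2 * B - 2 * J))).exp
          exact (h1.const_mul C).mul_const _
        · have h1 : HasDerivAt (fun s => 4 * B * s) (4 * B) r := by
            simpa using (hasDerivAt_id r).const_mul (4 * B)
          have h2 := ((h1.pow (n + 1)).div_const ((n + 1).factorial : ℝ)).const_mul 2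
          refine h2.congr_deriv ?_
          rw [Nat.factorial_succ]
          have h3 : (n.factorial : ℝ) ≠ 0 := by positivity
          have h4 : ((n : ℝ) + 1) ≠ 0 := by positivity
          push_cast
          field_simp
      · intro r hr
        have g := gain_bound hq.le hb hbnn hc hs hc0 hs0 (hφc r hr) (hφ1 r hr) hM1 hMfix
          (ih r hr) ξ
        rw [← hB, ← hJ] at g
        refine g.trans ?_
        have hr0 : (0 : ℝ) ≤ r := hr
        have h5 : 0 ≤ 2 * B * (2 * ((4 * B * r) ^ (n + 1) / (n + 1).factorial)) := by positivity
        linarith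
      · simpa using hinit ξ
  intro t ht ξ
  have hlim : Tendsto (fun n : ℕ => C * Real.exp (-(2 * B - 2 * J) * t) * |ξ| ^ q +
      2 * ((4 * B * t) ^ n / n.factorial)) atTop
      (𝓝 (C * Real.exp (-(2 * B - 2 * J) * t) * |ξ| ^ q + 2 * 0)) :=
    ((FloorSemiring.tendsto_pow_div_factorial_atTop (4 * B * t)).const_mul 2).const_add _
  rw [mul_zero, add_zero] at hlim
  exact ge_of_tendsto' hlim fun n => step n t ht ξ

/-- Strict positivity of the contraction rate: `cos^r + sin^r < 1` on `(0, π/2)` for `r > 2`. -/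
lemma rate_pos {b : ℝ → ℝ} {r : ℝ} (hr : 2 < r)
    (hb : IntervalIntegrable b volume 0 (π / 2)) (hbnn : ∀ θ, 0 ≤ b θ)
    (hnorm : ∫ θ in (0 : ℝ)..(π / 2), b θ * Real.sin θ ^ 2 = 1) :
    (∫ θ in (0 : ℝ)..(π / 2), b θ * (Real.cos θ ^ r + Real.sin θ ^ r)) <
      ∫ θ in (0 : ℝ)..(π / 2), b θ := by
  have hpi : (0 : ℝ) ≤ π / 2 := by positivity
  have hr0 : 0 ≤ r := by linarith
  have hcq : Continuous fun θ => Real.cos θ ^ r := Real.continuous_cos.rpow_const fun _ => Or.inr hr0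
  have hsq : Continuous fun θ => Real.sin θ ^ r := Real.continuous_sin.rpow_const fun _ => Or.inr hr0
  have i2 : IntervalIntegrable (fun θ => b θ * (Real.cos θ ^ r + Real.sin θ ^ r)) volume 0 (π / 2) :=
    hb.mul_continuousOn (by fun_prop)
  have i3 : IntervalIntegrable (fun θ => b θ * Real.sin θ ^ 2) volume 0 (π / 2) :=
    hb.mul_continuousOn (by fun_prop)
  have hlt : ∀ θ ∈ Ioo 0 (π / 2), Real.cos θ ^ r + Real.sin θ ^ r < 1 := by
    intro θ hθ
    have c0 : 0 < Real.cos θ := Real.cos_pos_of_mem_Ioo ⟨by linarith [hθ.1], hθ.2⟩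
    have s0 : 0 < Real.sin θ := Real.sin_pos_of_pos_of_lt_pi hθ.1 (by linarith [hθ.2, Real.pi_pos])
    have e := Real.sin_sq_add_cos_sq θ
    have c1 : Real.cos θ < 1 := by nlinarith
    have s1 : Real.sin θ < 1 := by nlinarith
    have h1 := Real.rpow_lt_rpow_of_exponent_gt c0 c1 hr
    have h2 := Real.rpow_lt_rpow_of_exponent_gt s0 s1 hr
    rw [Real.rpow_two] at h1 h2
    linarith
  have hne : volume.restrict (Ioc 0 (π / 2)) = volume.restrict (Ioo 0 (π / 2)) :=
    (restrict_Ioo_eq_restrict_Ioc).symm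
  have hlt' : ∀ᵐ θ ∂(volume.restrict (Ioc 0 (π / 2))), θ ∈ Ioo 0 (π / 2) := by
    rw [hne]; exact ae_restrict_mem measurableSet_Ioo
  by_contra hcon
  have hz : (∫ θ in (0 : ℝ)..(π / 2), (b θ - b θ * (Real.cos θ ^ r + Real.sin θ ^ r))) ≤ 0 := by
    rw [intervalIntegral.integral_sub hb i2]; linarith
  have hi := hb.sub i2
  rw [intervalIntegrable_iff_integrableOn_Ioc_of_le hpi] at hi
  have hnn : 0 ≤ᵐ[volume.restrict (Ioc 0 (π / 2))]
      fun θ => b θ - b θ * (Real.cos θ ^ r + Real.sin θ ^ r) := by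
    filter_upwards [hlt'] with θ hθ
    have := hlt θ hθ
    have := hbnn θ
    simp only [Pi.zero_apply]
    nlinarith
  rw [intervalIntegral.integral_of_le hpi] at hz
  have hz' := (setIntegral_eq_zero_iff_of_nonneg_ae hnn hi).1
    (le_antisymm hz (integral_nonneg_of_ae hnn))
  have hb0 : (fun θ => b θ * Real.sin θ ^ 2) =ᵐ[volume.restrict (Ioc 0 (π / 2))] 0 := by
    filter_upwards [hlt', hz'] with θ hθ h
    have h1 := hlt θ hθ
    simp only [Pi.zero_apply] at h ⊢
    have h2 : b θ * (1 - (Real.cos θ ^ r + Real.sin θ ^ r)) = 0 := by linarith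
    rcases mul_eq_zero.1 h2 with h3 | h3
    · simp [h3]
    · linarith
  rw [intervalIntegral.integral_of_le hpi, integral_congr_ae hb0] at hnorm
  simp at hnorm

/-! ### The initial distance -/

/-- Integrated form of the bound `|F' x - G x^(a-1)| ≤ H x^(a-1)`; `F` need not be differentiable
at `0`. -/
lemma abs_sub_le_of_deriv_bound {F : ℝ → ℝ} {a G H ξ : ℝ} (ha : 1 ≤ a)
    (hF : Continuous F) (hd : ∀ x > 0, DifferentiableAt ℝ F x)
    (hbd : ∀ x ∈ Ioc 0 ξ, |deriv F x - G * x ^ (a - 1)| ≤ H * x ^ (a - 1)) :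
    ∀ x ∈ Ioc 0 ξ, |F x - F 0 - G / a * x ^ a| ≤ H / a * x ^ a := by
  have ha0 : a ≠ 0 := by linarith
  have hpow : ∀ k x : ℝ, HasDerivAt (fun y => k / a * y ^ a) (k * x ^ (a - 1)) x := by
    intro k x
    refine ((Real.hasDerivAt_rpow_const (x := x) (p := a) (Or.inr ha)).const_mul
      (k / a)).congr_deriv ?_
    field_simp
  have hpc : ∀ k : ℝ, Continuous (fun y : ℝ => k / a * y ^ a) := fun k =>
    continuous_iff_continuousAt.2 fun x => (hpow k x).continuousAt
  have main : ∀ σ : ℝ, |σ| = 1 → ∀ x ∈ Ioc 0 ξ,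
      0 ≤ H / a * x ^ a - σ * (F x - F 0 - G / a * x ^ a) := by
    intro σ hσ x hx
    have hm : MonotoneOn (fun y => H / a * y ^ a - σ * (F y - F 0 - G / a * y ^ a))
        (Icc 0 ξ) := by
      refine monotoneOn_of_hasDerivWithinAt_nonneg (convex_Icc 0 ξ)
        (f' := fun y => H * y ^ (a - 1) - σ * (deriv F y - G * y ^ (a - 1))) ?_ ?_ ?_
      · exact ((hpc H).sub (continuous_const.mul ((hF.sub continuous_const).sub
          (hpc G)))).continuousOn
      · intro y hy
        rw [interior_Icc] at hy
        exact ((hpow H y).sub ((((hd y hy.1).hasDerivAt.sub_const _).sub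
          (hpow G y)).const_mul σ)).hasDerivWithinAt
      · intro y hy
        rw [interior_Icc] at hy
        have h1 := hbd y ⟨hy.1, hy.2.le⟩
        have h2 : σ * (deriv F y - G * y ^ (a - 1)) ≤ |deriv F y - G * y ^ (a - 1)| := by
          refine (le_abs_self _).trans ?_
          rw [abs_mul, hσ, one_mul]
        linarith
    have := hm ⟨le_rfl, hx.1.le.trans hx.2⟩ ⟨hx.1.le, hx.2⟩ hx.1.le
    simpa [Real.zero_rpow ha0] using this
  intro x hx
  have h1 := main 1 (by simp) x hx
  have h2 := main (-1) (by simp) x hx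
  exact abs_le.2 ⟨by linarith, by linarith⟩

/-- Condition (B) upgrades the leading-order expansion (A) to an expansion with remainder
`O(ξ^(a+δ))`: the constant `g ξ / a`, with `g ξ = F' ξ / ξ^(a-1)`, is compared with `-α` by
letting the endpoint tend to `0`. -/
lemma taylor_bound {F : ℝ → ℝ} {a α δ k : ℝ} (ha : 1 ≤ a) (hδ : 0 < δ) (hk : 0 ≤ k)
    (hF : Continuous F) (hF0 : F 0 = 1) (hd : ∀ x > 0, DifferentiableAt ℝ F x)
    (hA : Tendsto (fun ξ => (1 - F ξ) / ξ ^ a) (𝓝[>] 0) (𝓝 α))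
    (hB : ∀ ξ ∈ Ioc (0 : ℝ) 1, ∀ τ ∈ Ioc (0 : ℝ) 1, ξ ≠ τ →
      |deriv F ξ / ξ ^ (a - 1) - deriv F τ / τ ^ (a - 1)| ≤ k * |ξ - τ| ^ δ) :
    ∀ ξ ∈ Ioc (0 : ℝ) 1, |F ξ - 1 + α * ξ ^ a| ≤ 2 * k * ξ ^ (a + δ) := by
  intro ξ hξ
  have ha0 : 0 < a := by linarith
  set G := deriv F ξ / ξ ^ (a - 1) with hG
  set H := k * ξ ^ δ with hH
  have hH0 : 0 ≤ H := mul_nonneg hk (Real.rpow_nonneg hξ.1.le _)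
  have hbd : ∀ x ∈ Ioc 0 ξ, |deriv F x - G * x ^ (a - 1)| ≤ H * x ^ (a - 1) := by
    intro x hx
    have hx0 : 0 < x ^ (a - 1) := Real.rpow_pos_of_pos hx.1 _
    have h1 : |deriv F x / x ^ (a - 1) - G| ≤ H := by
      rcases eq_or_ne x ξ with rfl | hne
      · rw [← hG, sub_self, abs_zero]; exact hH0
      · refine (hB x ⟨hx.1, hx.2.trans hξ.2⟩ ξ hξ hne).trans ?_
        refine mul_le_mul_of_nonneg_left ?_ hk
        refine Real.rpow_le_rpow (abs_nonneg _) ?_ hδ.le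
        rw [abs_le]; constructor <;> linarith [hx.1, hx.2]
    have h2 : deriv F x - G * x ^ (a - 1) = (deriv F x / x ^ (a - 1) - G) * x ^ (a - 1) := by
      field_simp
    rw [h2, abs_mul, abs_of_pos hx0]
    exact mul_le_mul_of_nonneg_right h1 hx0.le
  have key := abs_sub_le_of_deriv_bound ha hF hd hbd
  rw [hF0] at key
  have hlim : |α + G / a| ≤ H / a := by
    refine le_of_tendsto (hA.add_const (G / a)).abs ?_
    filter_upwards [Ioc_mem_nhdsGT hξ.1] with x hx
    have hx0 : 0 < x ^ a := Real.rpow_pos_of_pos hx.1 _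
    have h1 : (1 - F x) / x ^ a + G / a = -((F x - 1 - G / a * x ^ a) / x ^ a) := by
      field_simp; ring
    rw [h1, abs_neg, abs_div, abs_of_pos hx0, div_le_iff₀ hx0]
    exact key x hx
  have h3 := key ξ ⟨hξ.1, le_rfl⟩
  have hξa : 0 < ξ ^ a := Real.rpow_pos_of_pos hξ.1 _
  have h4 : F ξ - 1 + α * ξ ^ a = (F ξ - 1 - G / a * ξ ^ a) + (α + G / a) * ξ ^ a := by ring
  have h5 : |(α + G / a) * ξ ^ a| ≤ H / a * ξ ^ a := by
    rw [abs_mul, abs_of_pos hξa]; exact mul_le_mul_of_nonneg_right hlim hξa.le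
  have h6 : H / a ≤ H := div_le_self hH0 ha
  have h7 : 2 * k * ξ ^ (a + δ) = 2 * (H * ξ ^ a) := by
    rw [Real.rpow_add hξ.1, hH]; ring
  rw [h4, h7]
  refine (abs_add_le _ _).trans ?_
  have := mul_le_mul_of_nonneg_right h6 hξa.le
  linarith

lemma abs_exp_neg_sub_le {y : ℝ} (hy : 0 ≤ y) : |Real.exp (-y) - 1 + y| ≤ y ^ 2 := by
  rcases le_total y 1 with h | h
  · have := Real.abs_exp_sub_one_sub_id_le (x := -y) (by rwa [abs_neg, abs_of_nonneg hy])
    simpa using this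
  · have h1 := Real.add_one_le_exp (-y)
    have h2 : Real.exp (-y) ≤ 1 := Real.exp_le_one_iff.2 (by linarith)
    rw [abs_of_nonneg (by linarith)]
    nlinarith

/-- Finiteness of the weighted distance between the datum and the equilibrium. -/
lemma initial_bound {F : ℝ → ℝ} {a α δ δ' k : ℝ} (ha : 1 ≤ a) (hδ : 0 < δ) (hδ1 : δ < 1)
    (hδ' : 0 < δ') (hle : δ' ≤ δ) (hk : 0 ≤ k) (hα : 0 < α)
    (hF : Continuous F) (hF0 : F 0 = 1) (hFabs : ∀ ξ, F |ξ| = F ξ) (hF1 : ∀ ξ, |F ξ| ≤ 1)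
    (hd : ∀ x > 0, DifferentiableAt ℝ F x)
    (hA : Tendsto (fun ξ => (1 - F ξ) / ξ ^ a) (𝓝[>] 0) (𝓝 α))
    (hB : ∀ ξ ∈ Ioc (0 : ℝ) 1, ∀ τ ∈ Ioc (0 : ℝ) 1, ξ ≠ τ →
      |deriv F ξ / ξ ^ (a - 1) - deriv F τ / τ ^ (a - 1)| ≤ k * |ξ - τ| ^ δ) (ξ : ℝ) :
    |F ξ - Real.exp (-α * |ξ| ^ a)| ≤ (2 * k + α ^ 2 + 2) * |ξ| ^ (a + δ') := by
  have ha0 : a ≠ 0 := by linarith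
  rw [← hFabs ξ]
  obtain ⟨x, hx⟩ : ∃ x, x = |ξ| := ⟨_, rfl⟩
  have hx0 : 0 ≤ x := hx ▸ abs_nonneg ξ
  rw [← hx]
  have hxa : 0 ≤ x ^ a := Real.rpow_nonneg hx0 _
  rcases hx0.eq_or_lt with h0 | hpos
  · rw [← h0, hF0, Real.zero_rpow ha0]
    simp only [mul_zero, Real.exp_zero, sub_self, abs_zero]
    positivity
  rcases le_total x 1 with h1 | h1
  · have t1 := taylor_bound ha hδ hk hF hF0 hd hA hB x ⟨hpos, h1⟩
    have t2 := abs_exp_neg_sub_le (y := α * x ^ a) (by positivity)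
    have p1 : x ^ (a + δ) ≤ x ^ (a + δ') :=
      Real.rpow_le_rpow_of_exponent_ge hpos h1 (by linarith)
    have p2 : (x ^ a) ^ 2 ≤ x ^ (a + δ') := by
      rw [pow_two, ← Real.rpow_add hpos]
      exact Real.rpow_le_rpow_of_exponent_ge hpos h1 (by linarith)
    have e : F x - Real.exp (-α * x ^ a) =
        (F x - 1 + α * x ^ a) - (Real.exp (-(α * x ^ a)) - 1 + α * x ^ a) := by
      rw [neg_mul]; ring
    rw [e]
    refine (abs_sub _ _).trans ?_
    have q1 : 2 * k * x ^ (a + δ) ≤ 2 * k * x ^ (a + δ') :=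
      mul_le_mul_of_nonneg_left p1 (by positivity)
    have q2 : (α * x ^ a) ^ 2 ≤ α ^ 2 * x ^ (a + δ') := by
      rw [mul_pow]; exact mul_le_mul_of_nonneg_left p2 (by positivity)
    have q3 : 0 ≤ x ^ (a + δ') := Real.rpow_nonneg hx0 _
    linarith
  · have p1 : 1 ≤ x ^ (a + δ') := Real.one_le_rpow h1 (by linarith)
    have p2 : Real.exp (-α * x ^ a) ≤ 1 :=
      Real.exp_le_one_iff.2 (by rw [neg_mul]; have : 0 ≤ α * x ^ a := by positivity
                                linarith)
    have p3 := Real.exp_pos (-α * x ^ a)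
    have p4 := abs_le.1 (hF1 x)
    have p5 : |F x - Real.exp (-α * x ^ a)| ≤ 2 :=
      abs_le.2 ⟨by linarith [p4.1], by linarith [p4.2]⟩
    have p6 : 0 ≤ 2 * k + α ^ 2 := by positivity
    nlinarith

/-! ### Convergence to equilibrium -/

/-- Large-time convergence of the solution of the dissipative Kac equation to
the Lévy-type Maxwellian `M̂_p(ξ) = exp(-α|ξ|^{2/(p+1)})`, in the weighted
Fourier metric of order `2/(p+1) + δ'`, for initial data satisfying
conditions (A) and (B). -/
theorem large_time_convergence_to_levy
    (p α : ℝ) (hp : 0 < p) (hp1 : p ≤ 1) (hα : 0 < α)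
    -- b_ε, a member of a grazing collision family
    (b : ℝ → ℝ) (cε dε : ℝ)
    (hb_int : IntegrableOn b (Icc (-(π / 2)) (π / 2)))
    (hb_even : ∀ θ, b θ = b |θ|)
    (hb_nonneg : ∀ θ, 0 ≤ b θ)
    (hc_pos : 0 < cε)
    (hsupp : ∀ θ, b θ ≠ 0 → cε ≤ |θ| ∧ |θ| ≤ dε)
    (hb_norm : ∫ θ in (0 : ℝ)..(π / 2), b θ * Real.sin θ ^ 2 = 1)
    -- the even initial probability density f₀
    (f₀ : ℝ → ℝ) (hf₀_nonneg : ∀ v, 0 ≤ f₀ v) (hf₀_int : Integrable f₀)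
    (hf₀_mass : ∫ v, f₀ v = 1) (hf₀_even : ∀ v, f₀ (-v) = f₀ v)
    -- condition (A)
    (hA : Tendsto (fun ξ => (1 - ftEven f₀ ξ) / ξ ^ (2 / (p + 1)))
      (𝓝[>] 0) (𝓝 α))
    -- condition (B)
    (hdiff : ∀ ξ > (0 : ℝ), DifferentiableAt ℝ (ftEven f₀) ξ)
    (δ : ℝ) (hδ : δ ∈ Ioo (0 : ℝ) 1) (K : ℝ → ℝ) (hK_pos : ∀ R > (0 : ℝ), 0 < K R)
    (hB : ∀ R > (0 : ℝ), ∀ ξ ∈ Ioc (0 : ℝ) R, ∀ τ ∈ Ioc (0 : ℝ) R, ξ ≠ τ →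
      |deriv (ftEven f₀) ξ / ξ ^ ((1 - p) / (p + 1)) -
        deriv (ftEven f₀) τ / τ ^ ((1 - p) / (p + 1))| ≤ K R * |ξ - τ| ^ δ)
    -- the solution f_ε of the dissipative Kac equation with initial datum f₀
    (fε : ℝ → ℝ → ℝ)
    (hfε_nonneg : ∀ v, ∀ t ∈ Ici (0 : ℝ), 0 ≤ fε v t)
    (hfε_int : ∀ t ∈ Ici (0 : ℝ), Integrable (fun v => fε v t))
    (hfε_init : ∀ v, fε v 0 = f₀ v)
    (hfε_eq : ∀ ξ : ℝ, ∀ t ∈ Ici (0 : ℝ),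
      HasDerivWithinAt (fun s => ftEven (fun v => fε v s) ξ)
        (2 * ∫ θ in (0 : ℝ)..(π / 2), b θ *
          (ftEven (fun v => fε v t) (ξ * Real.cos θ ^ (p + 1)) *
            ftEven (fun v => fε v t) (ξ * Real.sin θ ^ (p + 1)) -
            ftEven (fun v => fε v t) ξ))
        (Ici 0) t) :
    -- conclusion: lim_{t→∞} sup_{ξ≠0} |f̂_ε(ξ,t) - M̂_p(ξ)|/|ξ|^{2/(p+1)+δ'} = 0
    ∀ δ' : ℝ, 0 < δ' → δ' ≤ δ →
      ∀ η > (0 : ℝ), ∃ T : ℝ, ∀ t ≥ T, ∀ ξ : ℝ, ξ ≠ 0 →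
        |ftEven (fun v => fε v t) ξ - Real.exp (-α * |ξ| ^ (2 / (p + 1)))| /
          |ξ| ^ (2 / (p + 1) + δ') < η := by
  have hpi : (0 : ℝ) ≤ π / 2 := by positivity
  have hp1' : 0 < p + 1 := by linarith
  set a := 2 / (p + 1) with ha_def
  have ha1 : 1 ≤ a := by rw [ha_def, le_div_iff₀ hp1']; linarith
  have hpa : (p + 1) * a = 2 := by rw [ha_def]; field_simp
  have hexp : (1 - p) / (p + 1) = a - 1 := by rw [ha_def]; field_simp; ring
  rw [hexp] at hB
  intro δ' hδ' hle η hη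
  have hq : 0 < a + δ' := by linarith
  have hb : IntervalIntegrable b volume 0 (π / 2) := by
    rw [intervalIntegrable_iff_integrableOn_Icc_of_le hpi]
    exact hb_int.mono_set (Icc_subset_Icc (by linarith) le_rfl)
  have hc0 : ∀ θ ∈ Icc 0 (π / 2), 0 ≤ Real.cos θ := fun θ hθ =>
    Real.cos_nonneg_of_mem_Icc ⟨by linarith [hθ.1], hθ.2⟩
  have hs0 : ∀ θ ∈ Icc 0 (π / 2), 0 ≤ Real.sin θ := fun θ hθ =>
    Real.sin_nonneg_of_nonneg_of_le_pi hθ.1 (by linarith [hθ.2, Real.pi_pos])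
  have hinit_eq : (fun v => fε v 0) = f₀ := funext hfε_init
  have hF0 : ftEven f₀ 0 = 1 := by rw [ftEven_zero, hf₀_mass]
  have hmass : ∀ t ∈ Ici (0 : ℝ), ftEven (fun v => fε v t) 0 = 1 := by
    refine mass_eq_one (A := 2 * ∫ θ in (0 : ℝ)..(π / 2), b θ) (fun t ht => ?_) ?_
    · have h := hfε_eq 0 t ht
      simp only [zero_mul, intervalIntegral.integral_mul_const] at h
      rwa [← mul_assoc] at h
    · rw [hinit_eq, hF0]
  have hφ1 : ∀ t ∈ Ici (0 : ℝ), ∀ ξ, |ftEven (fun v => fε v t) ξ| ≤ 1 := fun t ht ξ =>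
    (ftEven_abs_le (hfε_int t ht) (fun v => hfε_nonneg v t ht) ξ).trans_eq (hmass t ht)
  have hF1 : ∀ ξ, |ftEven f₀ ξ| ≤ 1 := fun ξ =>
    (ftEven_abs_le hf₀_int hf₀_nonneg ξ).trans_eq hF0
  have hM1 : ∀ ξ : ℝ, |Real.exp (-α * |ξ| ^ a)| ≤ 1 := fun ξ => by
    rw [abs_of_pos (Real.exp_pos _), Real.exp_le_one_iff, neg_mul]
    have : 0 ≤ α * |ξ| ^ a := by positivity
    linarith
  -- the equilibrium is a fixed point of the gain term because `(r^(p+1))^a = r^2`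
  have hMfix : ∀ ξ : ℝ, ∀ θ ∈ Icc 0 (π / 2),
      Real.exp (-α * |ξ * Real.cos θ ^ (p + 1)| ^ a) *
        Real.exp (-α * |ξ * Real.sin θ ^ (p + 1)| ^ a) = Real.exp (-α * |ξ| ^ a) := by
    intro ξ θ hθ
    have w : ∀ r : ℝ, 0 ≤ r → |ξ * r ^ (p + 1)| ^ a = |ξ| ^ a * r ^ 2 := fun r hr => by
      rw [abs_mul, abs_of_nonneg (Real.rpow_nonneg hr _), Real.mul_rpow (abs_nonneg _)
        (Real.rpow_nonneg hr _), ← Real.rpow_mul hr, hpa, Real.rpow_two]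
    rw [← Real.exp_add, w _ (hc0 θ hθ), w _ (hs0 θ hθ)]
    congr 1
    linear_combination (-α * |ξ| ^ a) * Real.sin_sq_add_cos_sq θ
  have hinit := initial_bound ha1 hδ.1 hδ.2 hδ' hle (hK_pos 1 one_pos).le hα
    (ftEven_continuous hf₀_int) hF0 (ftEven_abs f₀) hF1 hdiff hA (hB 1 one_pos)
  set C := 2 * K 1 + α ^ 2 + 2 with hC_def
  have hC : 0 < C := by have := hK_pos 1 one_pos; positivity
  have hcon := contraction (φ := fun t ξ => ftEven (fun v => fε v t) ξ)
    (M := fun ξ => Real.exp (-α * |ξ| ^ a)) (c := fun θ => Real.cos θ ^ (p + 1))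
    (s := fun θ => Real.sin θ ^ (p + 1)) hq hb hb_nonneg
    (Real.continuous_cos.rpow_const fun _ => Or.inr hp1'.le)
    (Real.continuous_sin.rpow_const fun _ => Or.inr hp1'.le)
    (fun θ hθ => Real.rpow_nonneg (hc0 θ hθ) _) (fun θ hθ => Real.rpow_nonneg (hs0 θ hθ) _)
    (fun t ht => ftEven_continuous (hfε_int t ht)) hφ1 hM1 hMfix hfε_eq hC.le
    (by rw [hinit_eq]; exact hinit)
  have hJ : (∫ θ in (0 : ℝ)..(π / 2), b θ * ((Real.cos θ ^ (p + 1)) ^ (a + δ') +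
      (Real.sin θ ^ (p + 1)) ^ (a + δ'))) < ∫ θ in (0 : ℝ)..(π / 2), b θ := by
    have hr : 2 < (p + 1) * (a + δ') := by
      rw [mul_add, hpa]; have := mul_pos hp1' hδ'; linarith
    refine lt_of_eq_of_lt ?_ (rate_pos hr hb hb_nonneg hb_norm)
    refine intervalIntegral.integral_congr fun θ hθ => ?_
    rw [uIcc_of_le hpi] at hθ
    simp only [Real.rpow_mul (hc0 θ hθ), Real.rpow_mul (hs0 θ hθ)]
  beta_reduce at hcon
  set L := 2 * (∫ θ in (0 : ℝ)..(π / 2), b θ) - 2 * (∫ θ in (0 : ℝ)..(π / 2),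
    b θ * ((Real.cos θ ^ (p + 1)) ^ (a + δ') + (Real.sin θ ^ (p + 1)) ^ (a + δ'))) with hL_def
  have hL : 0 < L := by linarith
  have hdecay : Tendsto (fun t : ℝ => C * Real.exp (-L * t)) atTop (𝓝 (C * 0)) := by
    refine (Real.tendsto_exp_atBot.comp ?_).const_mul C
    exact tendsto_id.const_mul_atTop_of_neg (neg_lt_zero.2 hL)
  rw [mul_zero] at hdecay
  obtain ⟨T, hT⟩ := eventually_atTop.1
    ((hdecay.eventually (gt_mem_nhds hη)).and (eventually_ge_atTop (0 : ℝ)))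
  refine ⟨T, fun t ht ξ hξ => ?_⟩
  have hξ0 : 0 < |ξ| ^ (a + δ') := Real.rpow_pos_of_pos (abs_pos.2 hξ) _
  rw [div_lt_iff₀ hξ0]
  exact (hcon t (hT t ht).2 ξ).trans_lt (mul_lt_mul_of_pos_right (hT t ht).1 hξ0)

end
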